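/- arXiv:1506.07147 — 3 statements merged into one kernel-verified Lean document; each statement's English description precedes it below -/
import Mathlib

section
/- Let R be a semilocal Dedekind domain (a Dedekind domain with only finitely many maximal ideals) in which 2 is invertible, and let F be its field of fractions. Let G and G' be symmetric n×n matrices over R such that det G and det G' are squarefree elements of R (the corresponding quadratic forms have simple degeneration of multiplicity one). If there exists P ∈ GL_n(F) with Pᵀ·G·P = G', then there exists Q ∈ GL_n(R) with Qᵀ·G·Q = G'. -/
open Matrix

/-!
Induct on `n`. For `n ≥ 2` the form `G` takes a unit value `u` over `R`: it vanishes modulo no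
maximal ideal, since otherwise `det G` would be divisible by a square, so it takes a nonzero value
modulo each of them. Now `G'` represents `u` over `F`, and this descends to `R`: clearing
denominators gives an isotropic vector `(y, d)` of `G' ⊥ ⟨-u⟩` over `R`, and reflecting it in a
suitable vector `(z, 1)`, with `z` found modulo each maximal ideal and lifted by the Chinese
remainder theorem, makes the last coordinate a unit. At a maximal ideal containing `d` this needs
that `y` is not in the radical of the reduced form, which again follows from `det G'` being
squarefree. A vector of unit value splits off, so `G ≅ M ⊥ ⟨u⟩` and `G' ≅ M' ⊥ ⟨u⟩`; over `F` the
form `⟨u⟩` cancels, and the induction hypothesis applies to `M` and `M'`.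
-/

section Congruence

variable {ι κ R S : Type*} [Fintype ι] [CommRing R] [CommRing S]

theorem isSymm_transpose_mul_mul {A : Matrix ι ι R} (hA : A.IsSymm) (P : Matrix ι κ R) :
    (Pᵀ * A * P).IsSymm := by
  simp only [IsSymm, transpose_mul, transpose_transpose, hA.eq, Matrix.mul_assoc]

variable [DecidableEq ι] [Fintype κ] [DecidableEq κ]

theorem det_transpose_mul_mul (A P : Matrix ι ι R) : (Pᵀ * A * P).det = P.det ^ 2 * A.det := by
  rw [det_mul, det_mul, det_transpose]
  ring

/-- Congruence of square matrices over `R`: for Gram matrices of quadratic forms, this is isometry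
of the forms over `R`. -/
def IsCongruent (A B : Matrix ι ι R) : Prop :=
  ∃ P : Matrix ι ι R, IsUnit P ∧ Pᵀ * A * P = B

namespace IsCongruent

variable {A B C : Matrix ι ι R}

theorem symm (h : IsCongruent A B) : IsCongruent B A := by
  obtain ⟨P, hP, rfl⟩ := h
  obtain ⟨Q, hPQ, hQP⟩ := isUnit_iff_exists.1 hP
  have hQPt : Qᵀ * Pᵀ = 1 := by rw [← transpose_mul, hPQ, transpose_one]
  refine ⟨Q, isUnit_iff_exists.2 ⟨P, hQP, hPQ⟩, ?_⟩
  calc Qᵀ * (Pᵀ * A * P) * Q = (Qᵀ * Pᵀ) * A * (P * Q) := by simp only [Matrix.mul_assoc]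
    _ = A := by rw [hQPt, hPQ, Matrix.one_mul, Matrix.mul_one]

theorem trans (hAB : IsCongruent A B) (hBC : IsCongruent B C) : IsCongruent A C := by
  obtain ⟨P, hP, rfl⟩ := hAB
  obtain ⟨Q, hQ, rfl⟩ := hBC
  exact ⟨P * Q, hP.mul hQ, by simp only [transpose_mul, Matrix.mul_assoc]⟩

theorem map (f : R →+* S) (h : IsCongruent A B) : IsCongruent (A.map f) (B.map f) := by
  obtain ⟨P, hP, rfl⟩ := h
  exact ⟨P.map f, hP.map f.mapMatrix, by simp only [Matrix.map_mul, transpose_map]⟩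

theorem reindex (e : ι ≃ κ) (h : IsCongruent A B) :
    IsCongruent (reindex e e A) (reindex e e B) := by
  obtain ⟨P, hP, rfl⟩ := h
  exact ⟨reindex e e P, hP.map (reindexRingEquiv R e),
    by simp only [reindex_apply, transpose_submatrix, submatrix_mul_equiv]⟩

theorem reindex_iff (e : ι ≃ κ) :
    IsCongruent (Matrix.reindex e e A) (Matrix.reindex e e B) ↔ IsCongruent A B :=
  ⟨fun h ↦ by simpa using h.reindex e.symm, reindex e⟩

theorem fromBlocks_left (U : Matrix κ κ R) (h : IsCongruent A B) :
    IsCongruent (fromBlocks A 0 0 U) (fromBlocks B 0 0 U) := by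
  obtain ⟨P, hP, rfl⟩ := h
  refine ⟨fromBlocks P 0 0 1, isUnit_fromBlocks_zero₂₁.2 ⟨hP, isUnit_one⟩, ?_⟩
  simp [fromBlocks_multiply, fromBlocks_transpose]

theorem isSymm (h : IsCongruent A B) (hA : A.IsSymm) : B.IsSymm := by
  obtain ⟨P, -, rfl⟩ := h
  exact isSymm_transpose_mul_mul hA P

theorem associated_det (h : IsCongruent A B) : Associated A.det B.det := by
  obtain ⟨P, hP, rfl⟩ := h
  have hdet : IsUnit P.det := (isUnit_iff_isUnit_det P).1 hP
  exact ⟨(hdet.pow 2).unit, by rw [det_transpose_mul_mul, IsUnit.unit_spec, mul_comm]⟩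

/-- Comparing determinants, `det P ^ 2` divides the squarefree `det B`, so `P` is invertible. -/
theorem of_squarefree_det (hB : Squarefree B.det) {P : Matrix ι ι R} (hP : Pᵀ * A * P = B) :
    IsCongruent A B := by
  refine ⟨P, (isUnit_iff_isUnit_det P).2 (hB _ ⟨A.det, ?_⟩), hP⟩
  rw [← hP, det_transpose_mul_mul, sq]

theorem exists_dotProduct_mulVec_self_eq (h : IsCongruent A B) (y : ι → R) :
    ∃ x : ι → R, x ⬝ᵥ A *ᵥ x = y ⬝ᵥ B *ᵥ y := by
  obtain ⟨P, -, rfl⟩ := h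
  refine ⟨P *ᵥ y, ?_⟩
  rw [← mulVec_mulVec, ← mulVec_mulVec, dotProduct_mulVec y Pᵀ, vecMul_transpose]

end IsCongruent

end Congruence

section WittCancellation

variable {κ l R : Type*} [Fintype κ] [Fintype l] [DecidableEq l] [CommRing R]

/-- If `s` is an isometry of `U`, then the columns of `X = [1; -t * r]` are mapped by
`P = [D, c; r, a]` to those of `[D - c * t * r; s * t * r]`; comparing the Gram matrices of the two
families, the contributions of `U` agree. -/
theorem transpose_mul_mul_schur_eq {M M' D : Matrix κ κ R} {U a s t : Matrix l l R}
    {c : Matrix κ l R} {r : Matrix l κ R}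
    (h : (fromBlocks D c r a)ᵀ * fromBlocks M 0 0 U * fromBlocks D c r a = fromBlocks M' 0 0 U)
    (hs : sᵀ * U * s = U) (ht : (a + s) * t = 1) :
    (D - c * t * r)ᵀ * M * (D - c * t * r) = M' := by
  classical
  set P := fromBlocks D c r a
  set X : Matrix (κ ⊕ l) κ R := fromRows 1 (-(t * r))
  have hgram (N N' : Matrix κ κ R) (v : Matrix l κ R) :
      (fromRows N v)ᵀ * fromBlocks N' 0 0 U * fromRows N v = Nᵀ * N' * N + vᵀ * U * v := by
    simp [transpose_fromRows, fromCols_mul_fromBlocks, fromCols_mul_fromRows]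
  have hPX : P * X = fromRows (D - c * t * r) (s * t * r) := by
    have har : a * (t * r) = r - s * (t * r) := by
      rw [← Matrix.mul_assoc, eq_sub_of_add_eq ((Matrix.add_mul a s t).symm.trans ht),
        Matrix.sub_mul, Matrix.one_mul, Matrix.mul_assoc]
    simp [P, X, fromBlocks_mul_fromRows, Matrix.mul_assoc, har, sub_eq_add_neg]
  have hst : (s * t * r)ᵀ * U * (s * t * r) = (t * r)ᵀ * U * (t * r) := by
    calc (s * t * r)ᵀ * U * (s * t * r) = (t * r)ᵀ * (sᵀ * U * s) * (t * r) := by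
          simp only [transpose_mul, Matrix.mul_assoc]
      _ = (t * r)ᵀ * U * (t * r) := by rw [hs]
  refine add_right_cancel (b := (t * r)ᵀ * U * (t * r)) ?_
  calc (D - c * t * r)ᵀ * M * (D - c * t * r) + (t * r)ᵀ * U * (t * r)
      = (P * X)ᵀ * fromBlocks M 0 0 U * (P * X) := by rw [hPX, hgram, hst]
    _ = Xᵀ * (Pᵀ * fromBlocks M 0 0 U * P) * X := by
      simp only [transpose_mul, Matrix.mul_assoc]
    _ = M' + (t * r)ᵀ * U * (t * r) := by rw [h, hgram]; simp

theorem IsCongruent.of_fromBlocks [DecidableEq κ] [Unique l] [IsLocalRing R] (h2 : IsUnit (2 : R))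
    {M M' : Matrix κ κ R} {U : Matrix l l R} (hM' : Squarefree M'.det)
    (h : IsCongruent (fromBlocks M 0 0 U) (fromBlocks M' 0 0 U)) : IsCongruent M M' := by
  obtain ⟨P, -, hP⟩ := h
  rw [← fromBlocks_toBlocks P] at hP
  obtain ⟨s, hsU, hs⟩ : ∃ s : Matrix l l R, sᵀ * U * s = U ∧ IsUnit (P.toBlocks₂₂ + s) := by
    have hadd : IsUnit ((P.toBlocks₂₂ + 1).det + (1 - P.toBlocks₂₂).det) := by
      convert h2
      rw [det_unique, det_unique, Matrix.add_apply, Matrix.sub_apply, one_apply_eq]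
      ring
    rcases IsLocalRing.isUnit_or_isUnit_of_isUnit_add hadd with h | h
    · exact ⟨1, by simp, (isUnit_iff_isUnit_det _).2 h⟩
    · refine ⟨-1, by simp, ?_⟩
      rw [← sub_eq_add_neg, ← neg_sub]
      exact ((isUnit_iff_isUnit_det _).2 h).neg
  obtain ⟨t, ht⟩ := hs.exists_right_inv
  exact .of_squarefree_det hM' (transpose_mul_mul_schur_eq hP hsU ht)

end WittCancellation

section Determinant

variable {ι R : Type*} [Fintype ι] [DecidableEq ι] [CommRing R]

/-- In each term of the Leibniz expansion, either row `i` and column `i` contribute two distinct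
factors, or the diagonal entry `A i i` occurs. -/
theorem mul_dvd_det_of_dvd_row_of_dvd_col {A : Matrix ι ι R} {a b : R} {i : ι}
    (hrow : ∀ j, a ∣ A i j) (hcol : ∀ j, b ∣ A j i) (hdiag : a * b ∣ A i i) : a * b ∣ A.det := by
  rw [det_apply]
  refine Finset.dvd_sum fun σ _ ↦ dvd_smul_of_dvd _ ?_
  obtain hσ | hσ := eq_or_ne (σ i) i
  · exact hdiag.trans (by simpa [hσ] using
      Finset.dvd_prod_of_mem (fun j ↦ A (σ j) j) (Finset.mem_univ i))
  · have hi : i ∈ Finset.univ.erase (σ.symm i) := by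
      simpa [Equiv.eq_symm_apply] using hσ
    rw [← Finset.mul_prod_erase _ _ (Finset.mem_univ (σ.symm i)), ← Finset.mul_prod_erase _ _ hi,
      ← mul_assoc]
    refine Dvd.dvd.mul_right (mul_dvd_mul ?_ (hcol _)) _
    simpa using hrow (σ.symm i)

/-- Replace the `i`-th standard basis vector by `y`: this scales the determinant of the Gram matrix
by `y i ^ 2`. -/
theorem sq_dvd_sq_mul_det {G : Matrix ι ι R} (hG : G.IsSymm) {a : R} {y : ι → R}
    (hGy : ∀ j, a ∣ (G *ᵥ y) j) (hy : a ^ 2 ∣ y ⬝ᵥ G *ᵥ y) (i : ι) :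
    a ^ 2 ∣ y i ^ 2 * G.det := by
  set U : Matrix ι ι R := updateCol 1 i y with hU
  have hdet : (Uᵀ * G * U).det = y i ^ 2 * G.det := by
    have hUdet : U.det = y i := by rw [hU, ← cramer_apply, cramer_one, Module.End.one_apply]
    rw [det_transpose_mul_mul, hUdet]
  have hUi : U.col i = y := by ext k; simp [hU]
  have hcol (j : ι) : (Uᵀ * G * U) j i = U.col j ⬝ᵥ G *ᵥ y := by
    rw [mul_mul_apply, ← hUi]
    rfl
  have hdvd (j : ι) : a ∣ (Uᵀ * G * U) j i := by
    rw [hcol]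
    exact Finset.dvd_sum fun k _ ↦ (hGy k).mul_left _
  rw [← hdet, sq]
  refine mul_dvd_det_of_dvd_row_of_dvd_col (i := i) (fun j ↦ ?_) hdvd ?_
  · rw [(isSymm_transpose_mul_mul hG U).apply]
    exact hdvd j
  · rwa [hcol, hUi, ← sq]

/-- `G` is the Gram matrix of a quadratic form with simple degeneration of multiplicity one: it is
symmetric, with squarefree determinant. -/
structure HasSimpleDegeneration (G : Matrix ι ι R) : Prop where
  isSymm : G.IsSymm
  squarefree_det : Squarefree G.det

theorem HasSimpleDegeneration.of_isCongruent {A B : Matrix ι ι R} (hA : HasSimpleDegeneration A)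
    (h : IsCongruent A B) : HasSimpleDegeneration B where
  isSymm := h.isSymm hA.isSymm
  squarefree_det := hA.squarefree_det.squarefree_of_dvd h.associated_det.dvd'

theorem HasSimpleDegeneration.dvd_of_dvd_mulVec [IsDomain R] {G : Matrix ι ι R}
    (hG : HasSimpleDegeneration G) {π : R} (hπ : Prime π)
    {y : ι → R} (hGy : ∀ j, π ∣ (G *ᵥ y) j) (hy : π ^ 2 ∣ y ⬝ᵥ G *ᵥ y) (i : ι) : π ∣ y i := by
  by_contra hi
  have hdet : π ^ 2 ∣ G.det := hπ.pow_dvd_of_dvd_mul_left 2 (fun h ↦ hi (hπ.dvd_of_dvd_pow h))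
    (sq_dvd_sq_mul_det hG.isSymm hGy hy i)
  exact hπ.not_isUnit (hG.squarefree_det π (sq π ▸ hdet))

end Determinant

section Values

variable {ι R S : Type*} [Fintype ι] [CommRing R] [CommRing S]

theorem dotProduct_mulVec_comm {G : Matrix ι ι R} (hG : G.IsSymm) (x y : ι → R) :
    x ⬝ᵥ G *ᵥ y = y ⬝ᵥ G *ᵥ x := by
  rw [dotProduct_mulVec, ← mulVec_transpose, hG.eq, dotProduct_comm]

theorem map_dotProduct_mulVec (f : R →+* S) (G : Matrix ι ι R) (x y : ι → R) :
    f (x ⬝ᵥ G *ᵥ y) = (f ∘ x) ⬝ᵥ G.map f *ᵥ (f ∘ y) := by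
  rw [f.map_dotProduct]
  congr 1
  ext i
  exact f.map_mulVec G y i

theorem exists_dotProduct_mulVec_self_ne_zero {G : Matrix ι ι R} (hG : G.IsSymm)
    (h2 : IsUnit (2 : R)) (hG0 : G ≠ 0) : ∃ x : ι → R, x ⬝ᵥ G *ᵥ x ≠ 0 := by
  classical
  have := h2.invertible
  have hsymm : (toBilin' G).IsSymm := isSymm_toBilin'_iff_isSymm.2 hG
  simpa only [toBilin'_apply'] using LinearMap.BilinForm.exists_bilinForm_self_ne_zero
    (toBilin'.map_ne_zero_iff.2 hG0) ⟨hsymm.eq⟩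

end Values

section Reflection

variable {ι R S : Type*} [Fintype ι] [CommRing R] [CommRing S]

/-- The coordinates in `ι → R` of the vector obtained from `(y, d)` by the reflection in `(z, 1)`
with respect to the form `G ⊥ ⟨-u⟩`. The image is scaled by the value `z ⬝ᵥ G *ᵥ z - u` of the form
at `(z, 1)`, so that no division is needed. -/
def reflectionInit (G : Matrix ι ι R) (u d : R) (y z : ι → R) : ι → R :=
  (z ⬝ᵥ G *ᵥ z - u) • y - (2 * (y ⬝ᵥ G *ᵥ z - u * d)) • z

/-- The last coordinate of the vector obtained from `(y, d)` by the reflection in `(z, 1)` with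
respect to the form `G ⊥ ⟨-u⟩`, scaled as in `reflectionInit`. -/
def reflectionLast (G : Matrix ι ι R) (u d : R) (y z : ι → R) : R :=
  (u + z ⬝ᵥ G *ᵥ z) * d - 2 * y ⬝ᵥ G *ᵥ z

theorem reflectionInit_dotProduct_mulVec_self {G : Matrix ι ι R} (hG : G.IsSymm) {u d : R}
    {y : ι → R} (hy : y ⬝ᵥ G *ᵥ y = u * d ^ 2) (z : ι → R) :
    reflectionInit G u d y z ⬝ᵥ G *ᵥ reflectionInit G u d y z =
      u * reflectionLast G u d y z ^ 2 := by
  simp only [reflectionInit, reflectionLast, mulVec_sub, mulVec_smul, dotProduct_sub,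
    sub_dotProduct, smul_dotProduct, dotProduct_smul, smul_eq_mul, dotProduct_mulVec_comm hG z y,
    hy]
  ring

theorem map_reflectionLast (f : R →+* S) (G : Matrix ι ι R) (u d : R) (y z : ι → R) :
    f (reflectionLast G u d y z) = reflectionLast (G.map f) (f u) (f d) (f ∘ y) (f ∘ z) := by
  simp only [reflectionLast, map_sub, map_mul, map_add, map_ofNat, map_dotProduct_mulVec]

theorem exists_reflectionLast_ne_zero [IsDomain R] {G : Matrix ι ι R} (hG : G.IsSymm)
    (h2 : (2 : R) ≠ 0) {u d : R} (hu : u ≠ 0) {y : ι → R} (hGy : d = 0 → G *ᵥ y ≠ 0) :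
    ∃ z : ι → R, reflectionLast G u d y z ≠ 0 := by
  obtain rfl | hd := eq_or_ne d 0
  · obtain ⟨z, hz⟩ := not_forall.1 (dotProduct_eq_zero_iff.not.2 (hGy rfl))
    rw [dotProduct_comm, dotProduct_mulVec_comm hG] at hz
    exact ⟨z, by simpa [reflectionLast] using ⟨h2, hz⟩⟩
  · exact ⟨0, by simpa [reflectionLast] using ⟨hu, hd⟩⟩

end Reflection

section Semilocal

variable {R : Type*} [CommRing R]

theorem isUnit_of_forall_mk_ne_zero {a : R}
    (ha : ∀ m : MaximalSpectrum R, Ideal.Quotient.mk m.asIdeal a ≠ 0) : IsUnit a := by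
  by_contra h
  obtain ⟨I, hI, haI⟩ := exists_max_ideal_of_mem_nonunits h
  exact ha ⟨I, hI⟩ (Ideal.Quotient.eq_zero_iff_mem.2 haI)

theorem exists_forall_mk_comp_eq [Finite (MaximalSpectrum R)] {ι : Type*}
    (f : ∀ m : MaximalSpectrum R, ι → R ⧸ m.asIdeal) :
    ∃ x : ι → R, ∀ m, Ideal.Quotient.mk m.asIdeal ∘ x = f m := by
  have hcop : Pairwise (Function.onFun IsCoprime (MaximalSpectrum.asIdeal (R := R))) :=
    fun m n hmn ↦ Ideal.isCoprime_of_isMaximal (MaximalSpectrum.ext_iff.ne.mp hmn)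
  choose x hx using fun i ↦ Ideal.pi_quotient_surjective hcop (f · i)
  exact ⟨x, fun m ↦ funext fun i ↦ hx i m⟩

end Semilocal

section Localization

/-- Clear denominators with `d` minimal for divisibility. -/
theorem exists_primitive_integer_multiple {R : Type*} (F : Type*) [CommRing R] [IsDomain R]
    [WfDvdMonoid R] [Field F] [Algebra R F] [IsFractionRing R F] {ι : Type*} [Finite ι]
    (w : ι → F) :
    ∃ d : R, d ≠ 0 ∧ ∃ y : ι → R, algebraMap R F ∘ y = algebraMap R F d • w ∧
      ∀ π, Prime π → π ∣ d → ¬∀ i, π ∣ y i := by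
  have hne : {d : R | d ≠ 0 ∧ ∃ y : ι → R, algebraMap R F ∘ y = algebraMap R F d • w}.Nonempty := by
    obtain ⟨b, hb⟩ := IsLocalization.exist_integer_multiples_of_finite (nonZeroDivisors R) w
    choose y hy using hb
    exact ⟨b, nonZeroDivisors.coe_ne_zero b, y, funext fun i ↦ by simp [hy, Algebra.smul_def]⟩
  obtain ⟨d, ⟨hd, y, hy⟩, hmin⟩ := WellFounded.has_min (wellFounded_dvdNotUnit (α := R)) _ hne
  refine ⟨d, hd, y, hy, ?_⟩
  rintro π hπ ⟨d', rfl⟩ hdvd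
  choose y' hy' using hdvd
  have hπF : algebraMap R F π ≠ 0 := by simpa using hπ.ne_zero
  refine hmin d' ⟨right_ne_zero_of_mul hd, y', funext fun i ↦ mul_left_cancel₀ hπF ?_⟩
    ⟨right_ne_zero_of_mul hd, π, hπ.not_isUnit, mul_comm _ _⟩
  simpa [hy', mul_assoc] using congrFun hy i

end Localization

section Representation

variable {ι R : Type*} [Fintype ι] [DecidableEq ι] [CommRing R]

theorem HasSimpleDegeneration.map_mk_ne_zero [Nontrivial ι] {G : Matrix ι ι R}
    (hG : HasSimpleDegeneration G) {I : Ideal R} [I.IsPrincipal] (hI : I ≠ ⊤) :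
    G.map (Ideal.Quotient.mk I) ≠ 0 := by
  intro h0
  have hdvd (i j : ι) : Submodule.IsPrincipal.generator I ∣ G i j :=
    (Submodule.IsPrincipal.mem_iff_generator_dvd I).1
      (Ideal.Quotient.eq_zero_iff_mem.1 (congrFun₂ h0 i j))
  choose H hH using hdvd
  have hGH : G = Submodule.IsPrincipal.generator I • of H := by ext i j; simp [hH]
  have hdet : Submodule.IsPrincipal.generator I ^ 2 ∣ G.det := by
    rw [hGH, det_smul]
    exact (pow_dvd_pow _ Fintype.one_lt_card).mul_right _
  have hunit : IsUnit (Submodule.IsPrincipal.generator I) :=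
    hG.squarefree_det _ (sq (Submodule.IsPrincipal.generator I) ▸ hdet)
  exact hI (I.eq_top_of_isUnit_mem (Submodule.IsPrincipal.generator_mem I) hunit)

variable [IsPrincipalIdealRing R] [Finite (MaximalSpectrum R)]

theorem HasSimpleDegeneration.exists_isUnit_dotProduct_mulVec_self [Nontrivial ι]
    (h2 : IsUnit (2 : R)) {G : Matrix ι ι R} (hG : HasSimpleDegeneration G) :
    ∃ x : ι → R, IsUnit (x ⬝ᵥ G *ᵥ x) := by
  have hloc (m : MaximalSpectrum R) :
      ∃ v : ι → R ⧸ m.asIdeal, v ⬝ᵥ G.map (Ideal.Quotient.mk m.asIdeal) *ᵥ v ≠ 0 :=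
    exists_dotProduct_mulVec_self_ne_zero (hG.isSymm.map _)
      (map_ofNat (Ideal.Quotient.mk m.asIdeal) 2 ▸ h2.map (Ideal.Quotient.mk m.asIdeal))
      (hG.map_mk_ne_zero m.isMaximal.ne_top)
  choose v hv using hloc
  obtain ⟨x, hx⟩ := exists_forall_mk_comp_eq v
  exact ⟨x, isUnit_of_forall_mk_ne_zero fun m ↦ by rw [map_dotProduct_mulVec, hx]; exact hv m⟩

variable [IsDomain R]

theorem HasSimpleDegeneration.exists_isUnit_reflectionLast (h2 : IsUnit (2 : R))
    {G : Matrix ι ι R} (hG : HasSimpleDegeneration G) {u d : R} (hu : IsUnit u) (hd : d ≠ 0)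
    {y : ι → R} (hy : y ⬝ᵥ G *ᵥ y = u * d ^ 2) (hprim : ∀ π, Prime π → π ∣ d → ¬∀ i, π ∣ y i) :
    ∃ z : ι → R, IsUnit (reflectionLast G u d y z) := by
  have hloc (m : MaximalSpectrum R) : ∃ z : ι → R ⧸ m.asIdeal,
      letI k := Ideal.Quotient.mk m.asIdeal
      reflectionLast (G.map k) (k u) (k d) (k ∘ y) z ≠ 0 := by
    have := m.isMaximal
    have h2m : (2 : R ⧸ m.asIdeal) ≠ 0 :=
      map_ofNat (Ideal.Quotient.mk m.asIdeal) 2 ▸ (h2.map (Ideal.Quotient.mk m.asIdeal)).ne_zero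
    refine exists_reflectionLast_ne_zero (hG.isSymm.map _) h2m (hu.map _).ne_zero fun hdm hGy ↦ ?_
    have hmem : d ∈ m.asIdeal := Ideal.Quotient.eq_zero_iff_mem.1 hdm
    have hπ : Prime (Submodule.IsPrincipal.generator m.asIdeal) :=
      Submodule.IsPrincipal.prime_generator_of_isPrime _
        ((Submodule.ne_bot_iff _).2 ⟨d, hmem, hd⟩)
    have hπd := (Submodule.IsPrincipal.mem_iff_generator_dvd _).1 hmem
    refine hprim _ hπ hπd (hG.dvd_of_dvd_mulVec hπ (fun j ↦ ?_) ?_)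
    · rw [← Submodule.IsPrincipal.mem_iff_generator_dvd, ← Ideal.Quotient.eq_zero_iff_mem,
        RingHom.map_mulVec]
      exact congrFun hGy j
    · exact hy ▸ (pow_dvd_pow_of_dvd hπd 2).mul_left u
  choose z hz using hloc
  obtain ⟨z', hz'⟩ := exists_forall_mk_comp_eq z
  exact ⟨z', isUnit_of_forall_mk_ne_zero fun m ↦ by rw [map_reflectionLast, hz']; exact hz m⟩

theorem HasSimpleDegeneration.exists_dotProduct_mulVec_self_eq_of_primitive (h2 : IsUnit (2 : R))
    {G : Matrix ι ι R} (hG : HasSimpleDegeneration G) {u d : R} (hu : IsUnit u) (hd : d ≠ 0)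
    {y : ι → R} (hy : y ⬝ᵥ G *ᵥ y = u * d ^ 2) (hprim : ∀ π, Prime π → π ∣ d → ¬∀ i, π ∣ y i) :
    ∃ x : ι → R, x ⬝ᵥ G *ᵥ x = u := by
  obtain ⟨z, hz⟩ := hG.exists_isUnit_reflectionLast h2 hu hd hy hprim
  obtain ⟨e, he⟩ := hz.exists_left_inv
  refine ⟨e • reflectionInit G u d y z, ?_⟩
  calc (e • reflectionInit G u d y z) ⬝ᵥ G *ᵥ (e • reflectionInit G u d y z)
      = e * (e * (u * reflectionLast G u d y z ^ 2)) := by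
        rw [mulVec_smul, dotProduct_smul, smul_dotProduct,
          reflectionInit_dotProduct_mulVec_self hG.isSymm hy, smul_eq_mul, smul_eq_mul]
    _ = u * (e * reflectionLast G u d y z) ^ 2 := by ring
    _ = u := by rw [he, one_pow, mul_one]

theorem HasSimpleDegeneration.exists_dotProduct_mulVec_self_eq {F : Type*} [Field F] [Algebra R F]
    [IsFractionRing R F] (h2 : IsUnit (2 : R)) {G : Matrix ι ι R} (hG : HasSimpleDegeneration G)
    {u : R} (hu : IsUnit u) {w : ι → F}
    (hw : w ⬝ᵥ G.map (algebraMap R F) *ᵥ w = algebraMap R F u) :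
    ∃ x : ι → R, x ⬝ᵥ G *ᵥ x = u := by
  obtain ⟨d, hd, y, hy, hprim⟩ := exists_primitive_integer_multiple (R := R) F w
  refine hG.exists_dotProduct_mulVec_self_eq_of_primitive h2 hu hd
    (IsFractionRing.injective R F ?_) hprim
  rw [map_dotProduct_mulVec, hy, mulVec_smul, dotProduct_smul, smul_dotProduct, hw]
  simp only [smul_eq_mul, map_mul, map_pow]
  ring

end Representation

section Splitting

theorem exists_basis_last_eq_of_isUnit {R V : Type*} [CommRing R] [IsDomain R]
    [IsPrincipalIdealRing R] [AddCommGroup V] [Module R V] [Module.Free R V] [Module.Finite R V]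
    {n : ℕ} (hV : Module.finrank R V = n + 1) (φ : V →ₗ[R] R) {x : V} (hx : IsUnit (φ x)) :
    ∃ b : Module.Basis (Fin (n + 1)) R V,
      b (Fin.last n) = x ∧ ∀ i : Fin n, φ (b i.castSucc) = 0 := by
  obtain ⟨e, he⟩ := hx.exists_left_inv
  have hli (c : R) (v : V) (hv : v ∈ φ.ker) (h : c • x + v = 0) : c = 0 := by
    have hφ : c * φ x = 0 := by
      simpa [LinearMap.mem_ker.1 hv] using congrArg φ h
    exact hx.mul_left_eq_zero.1 hφ
  have hsp (v : V) : ∃ c : R, v + c • x ∈ φ.ker :=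
    ⟨-(φ v * e), by simp [mul_assoc, he]⟩
  let b := (Module.finBasis R φ.ker).mkFinSnoc x hli hsp
  obtain rfl : Module.finrank R φ.ker = n := by
    simpa [hV, eq_comm] using Module.finrank_eq_card_basis b
  exact ⟨b, by simp [b], fun i ↦ by simp [b]⟩

/-- The Gram matrix of the orthogonal sum of the form with Gram matrix `M` and the unary form
`⟨u⟩`, with the basis vector of `⟨u⟩` placed last. -/
def orthogonalSumUnary {R : Type*} [Zero R] {n : ℕ} (M : Matrix (Fin n) (Fin n) R) (u : R) :
    Matrix (Fin (n + 1)) (Fin (n + 1)) R :=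
  reindex finSumFinEquiv finSumFinEquiv (fromBlocks M 0 0 (of fun _ _ : Fin 1 ↦ u))

variable {R S : Type*} [CommRing R] [CommRing S] {n : ℕ} {M M' : Matrix (Fin n) (Fin n) R} {u : R}

theorem orthogonalSumUnary_map (f : R →+* S) :
    (orthogonalSumUnary M u).map f = orthogonalSumUnary (M.map f) (f u) := by
  rw [orthogonalSumUnary, orthogonalSumUnary, reindex_apply, reindex_apply, ← submatrix_map,
    fromBlocks_map, Matrix.map_zero _ (map_zero f), Matrix.map_zero _ (map_zero f)]
  rfl

theorem IsCongruent.orthogonalSumUnary_left (h : IsCongruent M M') (u : R) :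
    IsCongruent (orthogonalSumUnary M u) (orthogonalSumUnary M' u) :=
  (h.fromBlocks_left _).reindex _

theorem IsCongruent.of_orthogonalSumUnary [IsLocalRing R] (h2 : IsUnit (2 : R))
    (hM' : Squarefree M'.det)
    (h : IsCongruent (orthogonalSumUnary M u) (orthogonalSumUnary M' u)) : IsCongruent M M' :=
  IsCongruent.of_fromBlocks h2 hM' ((IsCongruent.reindex_iff _).1 h)

theorem HasSimpleDegeneration.of_orthogonalSumUnary
    (h : HasSimpleDegeneration (orthogonalSumUnary M u)) : HasSimpleDegeneration M where
  isSymm := by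
    have hblocks : (fromBlocks M 0 0 (of fun _ _ : Fin 1 ↦ u)).IsSymm := by
      simpa [orthogonalSumUnary] using h.isSymm.submatrix finSumFinEquiv
    exact (isSymm_fromBlocks_iff.1 hblocks).1
  squarefree_det := by
    refine h.squarefree_det.squarefree_of_dvd ?_
    rw [orthogonalSumUnary, det_reindex_self, det_fromBlocks_zero₂₁]
    exact dvd_mul_right _ _

theorem exists_isCongruent_orthogonalSumUnary [IsDomain R] [IsPrincipalIdealRing R]
    {G : Matrix (Fin (n + 1)) (Fin (n + 1)) R} (hG : G.IsSymm) {x : Fin (n + 1) → R}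
    (hx : IsUnit (x ⬝ᵥ G *ᵥ x)) :
    ∃ M : Matrix (Fin n) (Fin n) R, IsCongruent G (orthogonalSumUnary M (x ⬝ᵥ G *ᵥ x)) := by
  obtain ⟨b, hbx, hb⟩ := exists_basis_last_eq_of_isUnit (Module.finrank_fin_fun R)
    (dotProductBilin R R x ∘ₗ G.mulVecLin) hx
  have hb (i : Fin n) : x ⬝ᵥ G *ᵥ b i.castSucc = 0 := hb i
  refine ⟨of fun i j ↦ b i.castSucc ⬝ᵥ G *ᵥ b j.castSucc, (of b)ᵀ, ?_, ?_⟩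
  · rw [← Module.Basis.coePiBasisFun.toMatrix_eq_transpose]
    exact IsUnit.of_mul_eq_one _ ((Pi.basisFun R _).toMatrix_mul_toMatrix_flip b)
  · ext i j
    have hent : ((of b)ᵀᵀ * G * (of b)ᵀ) i j = b i ⬝ᵥ G *ᵥ b j := mul_mul_apply ..
    rw [hent]
    cases i using Fin.lastCases <;> cases j using Fin.lastCases
    · simp [orthogonalSumUnary, hbx, finSumFinEquiv_symm_last]
    · simp [orthogonalSumUnary, hbx, hb, finSumFinEquiv_symm_last]
    · simp [orthogonalSumUnary, hbx, hb, finSumFinEquiv_symm_last, dotProduct_mulVec_comm hG _ x]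
    · simp [orthogonalSumUnary]

end Splitting

section RankOne

theorem IsCongruent.of_map_fin_one {R F : Type*} [CommRing R] [IsDomain R] [IsIntegrallyClosed R]
    [DecompositionMonoid R] [Field F] [Algebra R F] [IsFractionRing R F]
    {G G' : Matrix (Fin 1) (Fin 1) R} (hG : Squarefree G.det) (hG' : Squarefree G'.det)
    (h : IsCongruent (G.map (algebraMap R F)) (G'.map (algebraMap R F))) : IsCongruent G G' := by
  obtain ⟨P, -, hP⟩ := h
  have hinj := IsFractionRing.injective R F
  set g := G 0 0
  rw [det_fin_one] at hG
  have hp : algebraMap R F g * P 0 0 ^ 2 = algebraMap R F (G' 0 0) := by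
    have hentry : P 0 0 * algebraMap R F g * P 0 0 = algebraMap R F (G' 0 0) := by
      simpa [Matrix.mul_apply] using congrFun₂ hP 0 0
    rw [← hentry]
    ring
  obtain ⟨c, hc⟩ : ∃ c, algebraMap R F c = algebraMap R F g * P 0 0 := by
    refine IsIntegrallyClosed.exists_algebraMap_eq_of_isIntegral_pow two_pos ?_
    rw [mul_pow, sq (algebraMap R F g), mul_assoc, hp, ← map_mul]
    exact isIntegral_algebraMap
  obtain ⟨q, rfl⟩ : g ∣ c := by
    refine hG.isRadical 2 c ⟨G' 0 0, hinj ?_⟩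
    rw [map_pow, map_mul, hc, ← hp]
    ring
  have hg0 : algebraMap R F g ≠ 0 := by simpa using hG.ne_zero
  have hPq : P = (of fun _ _ ↦ q : Matrix (Fin 1) (Fin 1) R).map (algebraMap R F) := by
    ext i j
    rw [Subsingleton.elim i 0, Subsingleton.elim j 0]
    exact mul_left_cancel₀ hg0 (by simpa using hc.symm)
  refine .of_squarefree_det hG' (P := of fun _ _ ↦ q) (map_injective hinj ?_)
  beta_reduce
  rw [← hP, hPq, Matrix.map_mul, Matrix.map_mul, transpose_map]

end RankOne

section Main

variable {R F : Type*} [CommRing R] [IsDomain R] [IsPrincipalIdealRing R]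
  [Finite (MaximalSpectrum R)] [Field F] [Algebra R F] [IsFractionRing R F]

theorem HasSimpleDegeneration.exists_common_splitting (h2 : IsUnit (2 : R)) {n : ℕ}
    {G G' : Matrix (Fin (n + 2)) (Fin (n + 2)) R} (hG : HasSimpleDegeneration G)
    (hG' : HasSimpleDegeneration G')
    (h : IsCongruent (G.map (algebraMap R F)) (G'.map (algebraMap R F))) :
    ∃ (u : R) (M M' : Matrix (Fin (n + 1)) (Fin (n + 1)) R),
      IsCongruent G (orthogonalSumUnary M u) ∧ IsCongruent G' (orthogonalSumUnary M' u) := by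
  obtain ⟨x, hx⟩ := hG.exists_isUnit_dotProduct_mulVec_self h2
  obtain ⟨w, hw⟩ := h.symm.exists_dotProduct_mulVec_self_eq (algebraMap R F ∘ x)
  rw [← map_dotProduct_mulVec] at hw
  obtain ⟨y, hy⟩ := hG'.exists_dotProduct_mulVec_self_eq h2 hx hw
  obtain ⟨M, hM⟩ := exists_isCongruent_orthogonalSumUnary hG.isSymm hx
  obtain ⟨M', hM'⟩ := exists_isCongruent_orthogonalSumUnary hG'.isSymm (hy ▸ hx)
  exact ⟨_, M, M', hM, hy ▸ hM'⟩

theorem IsCongruent.of_map_algebraMap (h2 : IsUnit (2 : R)) : ∀ {n : ℕ}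
    {G G' : Matrix (Fin n) (Fin n) R}, HasSimpleDegeneration G → HasSimpleDegeneration G' →
    IsCongruent (G.map (algebraMap R F)) (G'.map (algebraMap R F)) → IsCongruent G G'
  | 0, _, _, _, _, _ => ⟨1, isUnit_one, Subsingleton.elim _ _⟩
  | 1, _, _, hG, hG', h => of_map_fin_one hG.squarefree_det hG'.squarefree_det h
  | n + 2, G, G', hG, hG', h => by
    obtain ⟨u, M, M', hGM, hGM'⟩ := hG.exists_common_splitting h2 hG' h
    have hM : HasSimpleDegeneration M := (hG.of_isCongruent hGM).of_orthogonalSumUnary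
    have hM' : HasSimpleDegeneration M' := (hG'.of_isCongruent hGM').of_orthogonalSumUnary
    have h2F : IsUnit (2 : F) := map_ofNat (algebraMap R F) 2 ▸ h2.map (algebraMap R F)
    have hsq : Squarefree (M'.map (algebraMap R F)).det := by
      refine IsUnit.squarefree (isUnit_iff_ne_zero.2 ?_)
      simpa [← RingHom.mapMatrix_apply, ← RingHom.map_det] using hM'.squarefree_det.ne_zero
    have hF : IsCongruent (orthogonalSumUnary (M.map (algebraMap R F)) (algebraMap R F u))
        (orthogonalSumUnary (M'.map (algebraMap R F)) (algebraMap R F u)) := by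
      rw [← orthogonalSumUnary_map, ← orthogonalSumUnary_map]
      exact ((hGM.map _).symm.trans h).trans (hGM'.map _)
    have hMM' : IsCongruent M M' := of_map_algebraMap h2 hM hM' (.of_orthogonalSumUnary h2F hsq hF)
    exact (hGM.trans (hMM'.orthogonalSumUnary_left u)).trans hGM'.symm

end Main

/-- **Auel–Parimala–Suresh.**  Let `R` be a semilocal Dedekind domain (finitely many maximal
ideals) with `2` invertible, and `F` its fraction field.  If `G, G'` are symmetric matrices
over `R` with squarefree determinants (simple degeneration of multiplicity one), and there is
`P ∈ GL_n(F)` with `Pᵀ G P = G'` over `F`, then there is `Q ∈ GL_n(R)` with `Qᵀ G Q = G'`. -/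
theorem squarefree_det_quadratic_forms_rationally_isomorphic_iff_isomorphic
    {R F : Type*} [CommRing R] [IsDomain R] [IsDedekindDomain R]
    (hsemilocal : {I : Ideal R | I.IsMaximal}.Finite)
    [Field F] [Algebra R F] [IsFractionRing R F]
    (h2 : IsUnit (2 : R)) {n : ℕ}
    (G G' : Matrix (Fin n) (Fin n) R) (hG : G.IsSymm) (hG' : G'.IsSymm)
    (hGdet : Squarefree G.det) (hG'det : Squarefree G'.det)
    (hrat : ∃ P : Matrix (Fin n) (Fin n) F, IsUnit P ∧
      Pᵀ * G.map (algebraMap R F) * P = G'.map (algebraMap R F)) :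
    ∃ Q : Matrix (Fin n) (Fin n) R, IsUnit Q ∧ Qᵀ * G * Q = G' := by
  have := IsPrincipalIdealRing.of_finite_maximals hsemilocal
  have := hsemilocal.to_subtype
  have : Finite (MaximalSpectrum R) :=
    .of_injective (β := {I : Ideal R | I.IsMaximal}) (fun m ↦ ⟨m.asIdeal, m.isMaximal⟩)
      fun _ _ h ↦ MaximalSpectrum.ext (congrArg Subtype.val h)
  exact IsCongruent.of_map_algebraMap h2 ⟨hG, hGdet⟩ ⟨hG', hG'det⟩ hrat
end

section
/- Let A be a semilocal ring (i.e., A/Jac(A) is semisimple). Let P, Q, P', Q' be finitely generated projective right A-modules and let f : P → Q and f' : P' → Q' be A-linear maps. Then there exist A-module isomorphisms φ : P → P' and ψ : Q → Q' with f' ∘ φ = ψ ∘ f if and only if P ≅ P', Q ≅ Q', and coker(f) ≅ coker(f') as A-modules. -/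
/-!
Only the converse needs an argument. It rests on one fact: two surjections `p`, `p'` from a finitely
generated projective module `X` over a semilocal ring onto the same module differ by an automorphism
of `X`. Applied to the two maps from `Q` onto `coker f'`, it turns the isomorphism of cokernels into
`ψ : Q ≃ Q'` carrying `range f` onto `range f'`; applied to the two maps from `P` onto `range f'`,
it yields `φ`.

To prove that fact, write `J` for the Jacobson radical. Over the semisimple module `X / JX` the
automorphism is assembled from transvections, removing one simple summand of the discrepancy between
`p` and `p'` at a time. Since `p'` maps `JX` onto `JM`, the map `X → M × X / JX` built from `p'` has
large enough range for the automorphism of `X / JX` to lift to an endomorphism of `X` that still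
carries `p'` to `p`, and Nakayama's lemma makes that lift bijective.
-/

namespace Semilocal

open Function LinearMap

section Semisimple

variable {R S T M : Type*} [Ring R] [AddCommGroup S] [Module R S] [AddCommGroup T] [Module R T]
  [AddCommGroup M] [Module R M]

theorem exists_equiv_of_bijective_comp (q q' : S →ₗ[R] T) (s : T →ₗ[R] S)
    (hq : Bijective (q ∘ₗ s)) (hq' : Bijective (q' ∘ₗ s)) :
    ∃ t : S ≃ₗ[R] S, (∀ x, q' (t x) = q x) ∧ ∀ x, t x - x ∈ range s := by
  let e := LinearEquiv.ofBijective _ hq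
  let e' := LinearEquiv.ofBijective _ hq'
  have q_comp (y : T) : q (s (e.symm y)) = y := e.apply_symm_apply y
  have q'_comp (y : T) : q' (s (e'.symm y)) = y := e'.apply_symm_apply y
  have symm_q (y : T) : e.symm (q (s y)) = y := e.symm_apply_apply y
  have symm_q' (y : T) : e'.symm (q' (s y)) = y := e'.symm_apply_apply y
  let t : S →ₗ[R] S := .id + s ∘ₗ e'.symm ∘ₗ (q - q')
  let u : S →ₗ[R] S := .id + s ∘ₗ e.symm ∘ₗ (q' - q)
  have htu : t ∘ₗ u = .id := by
    ext x
    simp [t, u, q_comp, symm_q']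
    abel
  have hut : u ∘ₗ t = .id := by
    ext x
    simp [t, u, q'_comp, symm_q]
    abel
  refine ⟨.ofLinearMap t u htu hut, fun x ↦ ?_, fun x ↦ ?_⟩
  · simp [t, q'_comp]
  · exact ⟨e'.symm (q x - q' x), by simp [t]⟩

theorem exists_bijective_comp_of_isSimpleModule [IsSimpleModule R T] (q q' : S →ₗ[R] T)
    {s s' : T →ₗ[R] S} (hs : q ∘ₗ s = .id) (hs' : q' ∘ₗ s' = .id) :
    ∃ σ : T →ₗ[R] S, Bijective (q ∘ₗ σ) ∧ Bijective (q' ∘ₗ σ) := by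
  obtain hq's | hq's := bijective_or_eq_zero (q' ∘ₗ s)
  · exact ⟨s, hs ▸ bijective_id, hq's⟩
  obtain hqs' | hqs' := bijective_or_eq_zero (q ∘ₗ s')
  · exact ⟨s', hqs', hs' ▸ bijective_id⟩
  refine ⟨s + s', ?_, ?_⟩
  · rw [comp_add, hs, hqs', add_zero]
    exact bijective_id
  · rw [comp_add, hs', hq's, zero_add]
    exact bijective_id

theorem exists_equiv_sub_mem_lt [IsSemisimpleModule R S] {p p' : S →ₗ[R] M} (hp : Surjective p)
    (hp' : Surjective p') {N : Submodule R M} (hN : N ≠ ⊥) (hpp' : ∀ x, p' x - p x ∈ N) :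
    ∃ N₀ < N, ∃ t : S ≃ₗ[R] S, ∀ x, p' (t x) - p x ∈ N₀ := by
  have : IsSemisimpleModule R M := .of_surjective p hp
  obtain ⟨T, hTN, _⟩ := (IsSemisimpleModule.eq_bot_or_exists_simple_le N).resolve_left hN
  obtain ⟨π, hπ⟩ := IsSemisimpleModule.extension_property T.subtype T.injective_subtype .id
  replace hπ (y : T) : π y = y := LinearMap.congr_fun hπ y
  let L := N.comap p
  have mem_L {x : S} : p' x ∈ N ↔ x ∈ L := by
    rw [← sub_add_cancel (p' x) (p x)]
    exact N.add_mem_iff_right (hpp' x)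
  have hq : Surjective (π ∘ₗ p ∘ₗ L.subtype) := fun y ↦ by
    obtain ⟨x, hx⟩ := hp y
    exact ⟨⟨x, show p x ∈ N from hx ▸ hTN y.2⟩, by simp [hx, hπ]⟩
  have hq' : Surjective (π ∘ₗ p' ∘ₗ L.subtype) := fun y ↦ by
    obtain ⟨x, hx⟩ := hp' y
    exact ⟨⟨x, mem_L.mp (hx ▸ hTN y.2)⟩, by simp [hx, hπ]⟩
  obtain ⟨s, hs⟩ := IsSemisimpleModule.lifting_property _ hq .id
  obtain ⟨s', hs'⟩ := IsSemisimpleModule.lifting_property _ hq' .id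
  obtain ⟨σ, hσ, hσ'⟩ := exists_bijective_comp_of_isSimpleModule _ _ hs hs'
  obtain ⟨t, htπ, ht⟩ :=
    exists_equiv_of_bijective_comp (π ∘ₗ p) (π ∘ₗ p') (L.subtype ∘ₗ σ) hσ hσ'
  have hN₀ : N ⊓ ker π < N := by
    refine inf_lt_left.mpr fun hle ↦ ?_
    have := IsSimpleModule.nontrivial R T
    obtain ⟨y, hy⟩ := exists_ne (0 : T)
    exact hy (hπ y ▸ hle (hTN y.2))
  refine ⟨N ⊓ ker π, hN₀, t, fun x ↦ ⟨?_, ?_⟩⟩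
  · obtain ⟨y, hy⟩ := ht x
    have hmem : p' (t x - x) ∈ N := mem_L.mpr (hy ▸ (σ y).2)
    simpa using add_mem hmem (hpp' x)
  · simpa [sub_eq_zero] using htπ x

theorem exists_equiv_comp_eq_of_isSemisimpleModule [IsSemisimpleModule R S] [IsArtinian R M]
    {p p' : S →ₗ[R] M} (hp : Surjective p) (hp' : Surjective p') :
    ∃ t : S ≃ₗ[R] S, ∀ x, p' (t x) = p x := by
  obtain ⟨N, ⟨t, ht⟩, hmin⟩ := wellFounded_lt.has_min
    {N : Submodule R M | ∃ t : S ≃ₗ[R] S, ∀ x, p' (t x) - p x ∈ N}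
    ⟨⊤, .refl R S, fun _ ↦ Submodule.mem_top⟩
  obtain rfl | hN := eq_or_ne N ⊥
  · exact ⟨t, fun x ↦ sub_eq_zero.mp (ht x)⟩
  obtain ⟨N₀, hlt, u, hu⟩ := exists_equiv_sub_mem_lt (p' := p' ∘ₗ t) hp
    (hp'.comp t.surjective) hN ht
  exact (hmin N₀ ⟨u.trans t, hu⟩ hlt).elim

end Semisimple

section Nakayama

variable {R X Y : Type*} [Ring R] [AddCommGroup X] [Module R X] [AddCommGroup Y] [Module R Y]

theorem surjective_of_surjective_mkQ_comp [IsCoatomic (Submodule R Y)] {N : Submodule R Y}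
    (hN : N ≤ Module.jacobson R Y) {t : X →ₗ[R] Y} (ht : Surjective (N.mkQ ∘ₗ t)) :
    Surjective t := by
  have hsup : range t ⊔ N = ⊤ := by
    rw [← range_eq_top, range_comp, Submodule.map_mkQ_eq_top] at ht
    rwa [sup_comm]
  refine range_eq_top.mp (Order.radical_nongenerating (top_le_iff.mp ?_))
  rw [Order.radical, ← sInf_eq_iInf, ← hsup]
  exact sup_le_sup_left hN _

theorem bijective_of_mkQ_comp_eq [IsCoatomic (Submodule R X)] [IsCoatomic (Submodule R Y)]
    [Module.Projective R Y] {K : Submodule R X} {N : Submodule R Y}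
    (hK : K ≤ Module.jacobson R X) (hN : N ≤ Module.jacobson R Y) {t : X →ₗ[R] Y}
    (e : (X ⧸ K) ≃ₗ[R] (Y ⧸ N)) (hte : N.mkQ ∘ₗ t = e ∘ₗ K.mkQ) : Bijective t := by
  have ht : Surjective t := surjective_of_surjective_mkQ_comp hN <|
    hte ▸ e.surjective.comp K.mkQ_surjective
  obtain ⟨s, hts⟩ := t.exists_rightInverse_of_surjective (range_eq_top.mpr ht)
  have hse : K.mkQ ∘ₗ s = e.symm ∘ₗ N.mkQ := by
    rw [LinearEquiv.eq_toLinearMap_symm_comp, ← LinearMap.comp_assoc, ← hte, LinearMap.comp_assoc,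
      hts, LinearMap.comp_id]
  have hs : Surjective s := surjective_of_surjective_mkQ_comp hK <|
    hse ▸ e.symm.surjective.comp N.mkQ_surjective
  have hleft : LeftInverse t s := LinearMap.congr_fun hts
  exact ⟨(hleft.rightInverse_of_surjective hs).injective, ht⟩

end Nakayama

section Lifting

variable {R X M : Type*} [Ring R] [AddCommGroup X] [Module R X] [AddCommGroup M] [Module R M]

theorem exists_comp_eq_of_range_le {Y Z : Type*} [AddCommGroup Y] [Module R Y] [AddCommGroup Z]
    [Module R Z] [Module.Projective R X] {g : Y →ₗ[R] Z} {h : X →ₗ[R] Z} (hle : range h ≤ range g) :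
    ∃ l : X →ₗ[R] Y, g ∘ₗ l = h := by
  obtain ⟨l, hl⟩ := Module.projective_lifting_property g.rangeRestrict
    (h.codRestrict (range g) fun x ↦ hle ⟨x, rfl⟩) g.surjective_rangeRestrict
  exact ⟨l, congrArg ((range g).subtype ∘ₗ ·) hl⟩

theorem map_smul_top_of_surjective (I : Ideal R) {p : X →ₗ[R] M} (hp : Surjective p) :
    (I • (⊤ : Submodule R X)).map p = I • ⊤ := by
  rw [Submodule.map_smul'', Submodule.map_top, range_eq_top.mpr hp]

theorem isSemisimpleModule_quotient_smul_top (I : Ideal R) [I.IsTwoSided]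
    [IsSemisimpleRing (R ⧸ I)] : IsSemisimpleModule R (X ⧸ I • (⊤ : Submodule R X)) :=
  (Module.isTorsionBySet_quotient_ideal_smul X I).isSemisimpleModule_iff.mp inferInstance

theorem exists_comp_eq_and_mkQ_comp_eq [Module.Projective R X] {K : Submodule R X}
    {p p' : X →ₗ[R] M} (u : (X ⧸ K) →ₗ[R] (X ⧸ K))
    (hu : ∀ x y, K.mkQ y = u (K.mkQ x) → p' y - p x ∈ K.map p') :
    ∃ t : X →ₗ[R] X, p' ∘ₗ t = p ∧ K.mkQ ∘ₗ t = u ∘ₗ K.mkQ := by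
  have hle : range (p.prod (u ∘ₗ K.mkQ)) ≤ range (p'.prod K.mkQ) := by
    rintro _ ⟨x, rfl⟩
    obtain ⟨y, hy⟩ := K.mkQ_surjective (u (K.mkQ x))
    obtain ⟨k, hk, hpk⟩ := hu x y hy
    refine ⟨y - k, Prod.ext ?_ ?_⟩
    · simp [hpk]
    · simpa [(Submodule.Quotient.mk_eq_zero K).mpr hk] using hy
  obtain ⟨t, ht⟩ := exists_comp_eq_of_range_le hle
  exact ⟨t, congrArg (fst R M (X ⧸ K) ∘ₗ ·) ht, congrArg (snd R M (X ⧸ K) ∘ₗ ·) ht⟩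

variable [IsSemisimpleRing (R ⧸ Ring.jacobson R)] [Module.Finite R X] [Module.Projective R X]

theorem exists_equiv_comp_eq_of_surjective {p p' : X →ₗ[R] M} (hp : Surjective p)
    (hp' : Surjective p') : ∃ t : X ≃ₗ[R] X, p' ∘ₗ t = p := by
  let K : Submodule R X := Ring.jacobson R • ⊤
  let L : Submodule R M := Ring.jacobson R • ⊤
  have hpL : K.map p = L := map_smul_top_of_surjective _ hp
  have hp'L : K.map p' = L := map_smul_top_of_surjective _ hp'
  have : Module.Finite R M := .of_surjective p hp
  have : IsSemisimpleModule R (X ⧸ K) := isSemisimpleModule_quotient_smul_top _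
  have : IsSemisimpleModule R (M ⧸ L) := isSemisimpleModule_quotient_smul_top _
  obtain ⟨u, hu⟩ := exists_equiv_comp_eq_of_isSemisimpleModule
    (p := K.mapQ L p (Submodule.map_le_iff_le_comap.mp hpL.le))
    (p' := K.mapQ L p' (Submodule.map_le_iff_le_comap.mp hp'L.le))
    (.of_comp (g := K.mkQ) (L.mkQ_surjective.comp hp))
    (.of_comp (g := K.mkQ) (L.mkQ_surjective.comp hp'))
  obtain ⟨t, hpt, htu⟩ := exists_comp_eq_and_mkQ_comp_eq (p := p) (p' := p') u.toLinearMap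
    fun x y hxy ↦ by
      have hL : L.mkQ (p' y) = L.mkQ (p x) := by
        have hux := hu (K.mkQ x)
        rwa [← LinearEquiv.coe_coe, ← hxy] at hux
      exact hp'L ▸ (Submodule.Quotient.eq L).mp hL
  have hK : K ≤ Module.jacobson R X := Ring.jacobson_smul_top_le R X
  exact ⟨.ofBijective t (bijective_of_mkQ_comp_eq hK hK u htu), hpt⟩

theorem exists_equiv_comp_eq_of_range_eq {X' : Type*} [AddCommGroup X'] [Module R X']
    (e : X ≃ₗ[R] X') {g : X →ₗ[R] M} {g' : X' →ₗ[R] M} (h : range g = range g') :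
    ∃ φ : X ≃ₗ[R] X', g' ∘ₗ φ = g := by
  obtain ⟨t, ht⟩ := exists_equiv_comp_eq_of_surjective
    (p := LinearEquiv.ofEq _ _ h ∘ₗ g.rangeRestrict) (p' := g'.rangeRestrict ∘ₗ e)
    ((LinearEquiv.ofEq _ _ h).surjective.comp g.surjective_rangeRestrict)
    (g'.surjective_rangeRestrict.comp e.surjective)
  exact ⟨t.trans e, congrArg ((range g').subtype ∘ₗ ·) ht⟩

end Lifting

section Cokernel

variable {R P Q P' Q' : Type*} [Ring R] [AddCommGroup P] [AddCommGroup Q] [AddCommGroup P']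
  [AddCommGroup Q'] [Module R P] [Module R Q] [Module R P'] [Module R Q']
  {f : P →ₗ[R] Q} {f' : P' →ₗ[R] Q'}

theorem map_range_eq_of_comp_eq (φ : P ≃ₗ[R] P') (ψ : Q ≃ₗ[R] Q') (h : ∀ x, f' (φ x) = ψ (f x)) :
    (range f).map (ψ : Q →ₗ[R] Q') = range f' := by
  rw [← range_comp, ← LinearEquiv.range_comp φ f']
  exact congrArg range (LinearMap.ext fun x ↦ (h x).symm)

theorem map_eq_of_mkQ_comp_eq {N : Submodule R Q} {N' : Submodule R Q'} (ψ : Q ≃ₗ[R] Q')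
    (e : (Q ⧸ N) ≃ₗ[R] (Q' ⧸ N')) (h : N'.mkQ ∘ₗ ψ = e ∘ₗ N.mkQ) :
    N.map (ψ : Q →ₗ[R] Q') = N' := by
  have hker : N'.comap (ψ : Q →ₗ[R] Q') = N := by
    have hker := congrArg ker h
    rwa [ker_comp, Submodule.ker_mkQ, LinearEquiv.ker_comp, Submodule.ker_mkQ] at hker
  rw [← hker, Submodule.map_comap_eq_of_surjective ψ.surjective]

variable [IsSemisimpleRing (R ⧸ Ring.jacobson R)] [Module.Finite R P] [Module.Projective R P]
  [Module.Finite R Q] [Module.Projective R Q]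

theorem exists_equiv_of_quotient_range_equiv (eP : P ≃ₗ[R] P') (eQ : Q ≃ₗ[R] Q')
    (eC : (Q ⧸ range f) ≃ₗ[R] (Q' ⧸ range f')) :
    ∃ (φ : P ≃ₗ[R] P') (ψ : Q ≃ₗ[R] Q'), ∀ x, f' (φ x) = ψ (f x) := by
  obtain ⟨ψ, hψ⟩ := exists_equiv_comp_eq_of_range_eq eQ
    (g := eC ∘ₗ (range f).mkQ) (g' := (range f').mkQ) (by simp [range_comp])
  have hrange : range (ψ ∘ₗ f) = range f' := by
    rw [range_comp, map_eq_of_mkQ_comp_eq ψ eC hψ]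
  obtain ⟨φ, hφ⟩ := exists_equiv_comp_eq_of_range_eq eP hrange
  exact ⟨φ, ψ, LinearMap.congr_fun hφ⟩

end Cokernel

section Opposite

variable {R S : Type*} [Ring R] [Ring S]

theorem isUnit_of_sub_one_mem_jacobson {a : R} (ha : a - 1 ∈ Ring.jacobson R) : IsUnit a := by
  have exists_left_inv {b : R} (hb : b - 1 ∈ Ring.jacobson R) : ∃ c, c * b = 1 := by
    rw [← Ideal.jacobson_bot] at hb
    obtain ⟨c, hc⟩ := Ideal.exists_mul_sub_mem_of_sub_one_mem_jacobson b hb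
    exact ⟨c, sub_eq_zero.mp hc⟩
  obtain ⟨c, hca⟩ := exists_left_inv ha
  have hc : c - 1 ∈ Ring.jacobson R := by
    have : c - 1 = -c * (a - 1) := by
      rw [mul_sub, neg_mul, hca, mul_one]
      abel
    exact this ▸ Ideal.mul_mem_left _ _ ha
  obtain ⟨d, hdc⟩ := exists_left_inv hc
  exact isUnit_iff_exists_and_exists.mpr ⟨⟨c, left_inv_eq_right_inv hdc hca ▸ hdc⟩, c, hca⟩

instance isLocalHom_mk_jacobson : IsLocalHom (Ideal.Quotient.mk (Ring.jacobson R)) where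
  map_nonunit a ha := by
    obtain ⟨⟨b, hab⟩, c, hca⟩ := isUnit_iff_exists_and_exists.mp ha
    obtain ⟨b, rfl⟩ := Ideal.Quotient.mk_surjective b
    obtain ⟨c, rfl⟩ := Ideal.Quotient.mk_surjective c
    obtain ⟨b', hb'⟩ := (isUnit_of_sub_one_mem_jacobson (Ideal.Quotient.eq.mp hab)).exists_right_inv
    obtain ⟨c', hc'⟩ := (isUnit_of_sub_one_mem_jacobson (Ideal.Quotient.eq.mp hca)).exists_left_inv
    exact isUnit_iff_exists_and_exists.mpr
      ⟨⟨b * b', by rw [← mul_assoc, hb']⟩, c' * c, by rw [mul_assoc, hc']⟩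

instance isLocalHom_op (f : R →+* S) [IsLocalHom f] : IsLocalHom (RingHom.op f) where
  map_nonunit a ha := isUnit_unop.mp (IsUnit.of_map f a.unop (isUnit_unop.mpr ha))

theorem ker_le_jacobson_of_isLocalHom (f : R →+* S) [IsLocalHom f] :
    RingHom.ker f ≤ Ring.jacobson R := fun x hx ↦ by
  rw [← Ideal.jacobson_bot, Ideal.mem_jacobson_iff]
  intro y
  have hunit : IsUnit (y * x + 1) := .of_map f _ <| by
    simp [(RingHom.mem_ker).mp hx]
  obtain ⟨z, hz⟩ := hunit.exists_left_inv
  exact ⟨z, (Submodule.mem_bot R).mpr <| by rw [mul_assoc, ← mul_add_one, hz, sub_self]⟩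

theorem isSemisimpleRing_quotient_jacobson_of_surjective [IsSemisimpleRing S] (f : R →+* S)
    [IsLocalHom f] (hf : Surjective f) : IsSemisimpleRing (R ⧸ Ring.jacobson R) :=
  have : IsSemisimpleRing (R ⧸ RingHom.ker f) :=
    (RingHom.quotientKerEquivOfSurjective hf).symm.isSemisimpleRing
  (Ideal.Quotient.factor (ker_le_jacobson_of_isLocalHom f)).isSemisimpleRing_of_surjective
    (Ideal.Quotient.factor_surjective _)

theorem isSemisimpleRing_quotient_iff (I : Ideal R) [I.IsTwoSided] :
    IsSemisimpleRing (R ⧸ I) ↔ IsSemisimpleModule R (R ⧸ I) :=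
  have : RingHomSurjective (Ideal.Quotient.mk I) := ⟨Ideal.Quotient.mk_surjective⟩
  let e : (R ⧸ I) →ₛₗ[Ideal.Quotient.mk I] (R ⧸ I) := ⟨.id _, fun _ _ ↦ rfl⟩
  (e.isSemisimpleModule_iff_of_bijective bijective_id).symm

/-- A ring is semilocal as soon as it has a unit-reflecting surjection onto a semisimple ring, and
this condition passes to opposite rings. -/
theorem isSemisimpleRing_mulOpposite_quotient_jacobson [IsSemisimpleRing (R ⧸ Ring.jacobson R)] :
    IsSemisimpleRing (Rᵐᵒᵖ ⧸ Ring.jacobson Rᵐᵒᵖ) :=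
  isSemisimpleRing_quotient_jacobson_of_surjective
    (RingHom.op (Ideal.Quotient.mk (Ring.jacobson R)))
    (MulOpposite.op_surjective.comp (Ideal.Quotient.mk_surjective.comp MulOpposite.unop_surjective))

end Opposite

end Semilocal

/-- **Isomorphism in the category of morphisms of f.g. projective modules over a semilocal
ring.**  Let `A` be a semilocal ring (`A/Jac(A)` is semisimple).  Let `f : P → Q` and
`f' : P' → Q'` be `A`-linear maps between finitely generated projective right `A`-modules.
Then `(P, f, Q) ≅ (P', f', Q')` in the category of morphisms (i.e. there are isomorphisms
`φ : P ≅ P'` and `ψ : Q ≅ Q'` with `f' ∘ φ = ψ ∘ f`) if and only if `P ≅ P'`, `Q ≅ Q'` and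
`coker f ≅ coker f'`. -/
theorem morphism_iso_iff_modules_and_coker_iso
    {A : Type*} [Ring A]
    (hsemilocal : IsSemisimpleModule A (A ⧸ Ideal.jacobson (⊥ : Ideal A)))
    {P Q P' Q' : Type*}
    [AddCommGroup P] [AddCommGroup Q] [AddCommGroup P'] [AddCommGroup Q']
    [Module Aᵐᵒᵖ P] [Module Aᵐᵒᵖ Q] [Module Aᵐᵒᵖ P'] [Module Aᵐᵒᵖ Q']
    [Module.Finite Aᵐᵒᵖ P] [Module.Projective Aᵐᵒᵖ P]
    [Module.Finite Aᵐᵒᵖ Q] [Module.Projective Aᵐᵒᵖ Q]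
    [Module.Finite Aᵐᵒᵖ P'] [Module.Projective Aᵐᵒᵖ P']
    [Module.Finite Aᵐᵒᵖ Q'] [Module.Projective Aᵐᵒᵖ Q']
    (f : P →ₗ[Aᵐᵒᵖ] Q) (f' : P' →ₗ[Aᵐᵒᵖ] Q') :
    (∃ (φ : P ≃ₗ[Aᵐᵒᵖ] P') (ψ : Q ≃ₗ[Aᵐᵒᵖ] Q'), ∀ x : P, f' (φ x) = ψ (f x)) ↔
      (Nonempty (P ≃ₗ[Aᵐᵒᵖ] P') ∧ Nonempty (Q ≃ₗ[Aᵐᵒᵖ] Q') ∧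
        Nonempty ((Q ⧸ LinearMap.range f) ≃ₗ[Aᵐᵒᵖ] (Q' ⧸ LinearMap.range f'))) := by
  constructor
  · rintro ⟨φ, ψ, h⟩
    exact ⟨⟨φ⟩, ⟨ψ⟩,
      ⟨Submodule.Quotient.equiv _ _ ψ (Semilocal.map_range_eq_of_comp_eq φ ψ h)⟩⟩
  · rintro ⟨⟨eP⟩, ⟨eQ⟩, ⟨eC⟩⟩
    rw [Ideal.jacobson_bot, ← Semilocal.isSemisimpleRing_quotient_iff] at hsemilocal
    have := Semilocal.isSemisimpleRing_mulOpposite_quotient_jacobson (R := A)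
    exact Semilocal.exists_equiv_of_quotient_range_equiv eP eQ eC
end

section
/- Let A be a semilocal ring (i.e., A/Jac(A) is semisimple). Let V and V' be isomorphic finitely generated projective right A-modules, let U and U' be arbitrary right A-modules, let α : V → U and α' : V' → U' be surjective A-linear maps, and let ξ : U → U' be an A-module isomorphism. Then there exists an A-module isomorphism ψ : V → V' such that ξ ∘ α = α' ∘ ψ. -/
/-!
A ring `E` has stable range one if `aE + bE = E` forces `a + by` to be a unit for some `y`.
Suppose `V` is projective and `α, α' : V → U` are surjective. Lift `α` through `α'` to `f` and `α'`
through `α` to `g`, both endomorphisms of `V`. Then `b = 1 - f g` satisfies `α' b = 0`, so if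
`End V` has stable range one, some `f + b y` is an automorphism, and it still satisfies
`α' (f + b y) = α`.

For `V` finitely generated projective over a semilocal ring `A`, the ring `End V` does have stable
range one: the property passes from `Mₙ(A)/J(Mₙ(A)) = Mₙ(A/J(A))` to `Mₙ(A) = End Aⁿ` and then to
the direct summand `V` of `Aⁿ`. For the semisimple ring `Mₙ(A/J(A))` it reduces, by
Artin–Wedderburn, to linear algebra over a division ring.
-/

open LinearMap

/-- Stable range one, in its right-handed form: whenever the right ideals `aE` and `bE` together
generate `E`, the coset `a + bE` contains a unit. -/
def HasStableRangeOne (E : Type*) [Ring E] : Prop :=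
  ∀ a b x z : E, a * x + b * z = 1 → ∃ y, IsUnit (a + b * y)

namespace HasStableRangeOne

theorem of_surjective_of_isLocalHom {E F : Type*} [Ring E] [Ring F] (φ : E →+* F) [IsLocalHom φ]
    (hφ : Function.Surjective φ) (hF : HasStableRangeOne F) : HasStableRangeOne E := by
  intro a b x z h
  obtain ⟨y', hy'⟩ := hF (φ a) (φ b) (φ x) (φ z) (by simp only [← map_mul, ← map_add, h, map_one])
  obtain ⟨y, rfl⟩ := hφ y'
  exact ⟨y, isUnit_of_map_unit φ _ (by simpa only [map_add, map_mul] using hy')⟩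

theorem of_ringEquiv {E F : Type*} [Ring E] [Ring F] (e : E ≃+* F) (hF : HasStableRangeOne F) :
    HasStableRangeOne E :=
  of_surjective_of_isLocalHom (e : E →+* F) e.surjective hF

theorem pi {ι : Type*} {E : ι → Type*} [∀ i, Ring (E i)] (h : ∀ i, HasStableRangeOne (E i)) :
    HasStableRangeOne (∀ i, E i) := by
  intro a b x z hab
  choose y hy using fun i ↦ h i (a i) (b i) (x i) (z i) (congrFun hab i)
  exact ⟨y, Pi.isUnit_iff.mpr hy⟩

theorem moduleEnd_of_retract {R M N : Type*} [Ring R] [AddCommGroup M] [AddCommGroup N]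
    [Module R M] [Module R N] (i : M →ₗ[R] N) (p : N →ₗ[R] M) (hpi : p ∘ₗ i = .id)
    (hN : HasStableRangeOne (Module.End R N)) : HasStableRangeOne (Module.End R M) := by
  intro a b x z h
  have hp (m : M) : p (i m) = m := LinearMap.congr_fun hpi m
  have hab (m : M) : a (x m) + b (z m) = m := LinearMap.congr_fun h m
  -- Extend `a` and `x` to `N` by the identity on `ker p`, and `b` and `z` by zero.
  let q : Module.End R N := 1 - i ∘ₗ p
  obtain ⟨y, hy⟩ := hN (i ∘ₗ a ∘ₗ p + q) (i ∘ₗ b ∘ₗ p) (i ∘ₗ x ∘ₗ p + q) (i ∘ₗ z ∘ₗ p) <| by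
    ext n
    have hi : i (a (x (p n))) + i (b (z (p n))) = i (p n) := by rw [← map_add, hab]
    simp only [q, hp, LinearMap.add_apply, LinearMap.sub_apply, Module.End.mul_apply,
      Module.End.one_apply, comp_apply, map_add, map_sub, sub_self, add_zero, add_sub_cancel_left]
    linear_combination (norm := abel) hi
  set u : Module.End R N := i ∘ₗ a ∘ₗ p + q + (i ∘ₗ b ∘ₗ p) * y
  have hpu (m : M) : p (u (i m)) = (a + b * (p ∘ₗ y ∘ₗ i)) m := by simp [u, q, hp]
  have hqu (n : N) : u n - i (p (u n)) = n - i (p n) := by simp [u, q, hp]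
  rw [Module.End.isUnit_iff] at hy
  refine ⟨p ∘ₗ y ∘ₗ i, (Module.End.isUnit_iff _).mpr ⟨?_, fun m ↦ ?_⟩⟩
  · refine (injective_iff_map_eq_zero _).mpr fun m hm ↦ ?_
    have hu : u (i m) = u 0 := by simpa [hpu, hm, hp] using hqu (i m)
    simpa [hp] using congrArg p (hy.1 hu)
  · obtain ⟨n, hn⟩ := hy.2 (i m)
    have hin : i (p n) = n := by
      have hqn : n - i (p n) = 0 := by simpa [hn, hp] using (hqu n).symm
      exact (sub_eq_zero.mp hqn).symm
    exact ⟨p n, by rw [← hpu, hin, hn, hp]⟩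

/-- If `range a + range b = V`, then `ker a` is isomorphic to a complement of `range a` inside
`range b`; an isomorphism, extended by zero and lifted through `b`, turns `a` into a unit. -/
theorem moduleEnd_of_divisionRing {D V : Type*} [DivisionRing D] [AddCommGroup V] [Module D V]
    [FiniteDimensional D V] : HasStableRangeOne (Module.End D V) := by
  intro a b x z h
  have hcod : Codisjoint (range b) (range a) := by
    refine codisjoint_iff.mpr (eq_top_iff.mpr fun v _ ↦ ?_)
    have hv : a (x v) + b (z v) = v := LinearMap.congr_fun h v
    rw [← hv, add_comm (a (x v))]
    exact Submodule.add_mem_sup (mem_range_self b _) (mem_range_self a _)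
  obtain ⟨W, hWb, hW⟩ := hcod.exists_isCompl
  obtain ⟨θ⟩ : Nonempty (ker a ≃ₗ[D] W) := by
    refine FiniteDimensional.nonempty_linearEquiv_of_finrank_eq ?_
    have := Submodule.finrank_add_eq_of_isCompl hW
    have := a.finrank_range_add_finrank_ker
    lia
  obtain ⟨π, hπ⟩ := (ker a).subtype.exists_leftInverse_of_injective (ker a).ker_subtype
  obtain ⟨y, hy⟩ := Module.projective_lifting_property b.rangeRestrict
    (Submodule.inclusion hWb ∘ₗ θ.toLinearMap ∘ₗ π) b.surjective_rangeRestrict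
  have hby (v : V) : b (y v) = θ (π v) := congrArg Subtype.val (LinearMap.congr_fun hy v)
  refine ⟨y, (isUnit_iff_ker_eq_bot _).mpr (ker_eq_bot'.mpr fun v hv ↦ ?_)⟩
  have hv : a v + θ (π v) = 0 := by rw [← hby]; exact hv
  have hθ : (θ (π v) : V) = 0 := by
    refine Submodule.disjoint_def.mp hW.disjoint _ (θ (π v)).2 ?_
    rw [eq_neg_of_add_eq_zero_right hv]
    exact neg_mem (mem_range_self a v)
  have hav : a v = 0 := by simpa [hθ] using hv
  calc v = (π v : V) := congrArg Subtype.val (LinearMap.congr_fun hπ ⟨v, hav⟩).symm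
    _ = 0 := by simpa using hθ

end HasStableRangeOne

/-- The ring of `A`-valued square matrices as the endomorphism ring of a free right `A`-module. -/
def matrixRingEquivEndMulOpposite (ι A : Type*) [Fintype ι] [DecidableEq ι] [Ring A] :
    Matrix ι ι A ≃+* Module.End Aᵐᵒᵖ (ι → Aᵐᵒᵖ) :=
  ((RingEquiv.opOp A).trans (RingEquiv.moduleEndSelf Aᵐᵒᵖ)).mapMatrix.trans
    (endVecRingEquivMatrixEnd ι Aᵐᵒᵖ Aᵐᵒᵖ).symm

theorem HasStableRangeOne.of_isSemisimpleRing (E : Type*) [Ring E] [IsSemisimpleRing E] :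
    HasStableRangeOne E := by
  obtain ⟨n, D, d, _, _, ⟨e⟩⟩ := IsSemisimpleRing.exists_ringEquiv_pi_matrix_divisionRing E
  exact .of_ringEquiv e <| .pi fun i ↦
    .of_ringEquiv (matrixRingEquivEndMulOpposite (Fin (d i)) (D i)) .moduleEnd_of_divisionRing

section Jacobson

variable {A : Type*} [Ring A]

theorem isUnit_of_sub_one_mem_ringJacobson {r : A} (hr : r - 1 ∈ Ring.jacobson A) : IsUnit r := by
  have exists_left_inv {r : A} (hr : r - 1 ∈ Ring.jacobson A) : ∃ s, s * r = 1 := by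
    rw [← Ideal.jacobson_bot] at hr
    simpa [sub_eq_zero] using Ideal.exists_mul_sub_mem_of_sub_one_mem_jacobson r hr
  obtain ⟨s, hs⟩ := exists_left_inv hr
  -- A left inverse of `r` is again congruent to `1`, hence has a left inverse itself.
  have hs' : s - 1 = -(s * (r - 1)) := by rw [mul_sub, hs, mul_one, neg_sub]
  obtain ⟨t, ht⟩ := exists_left_inv (r := s) (hs' ▸ neg_mem (Ideal.mul_mem_left _ s hr))
  exact isUnit_iff_exists_and_exists.mpr ⟨⟨s, left_inv_eq_right_inv ht hs ▸ ht⟩, s, hs⟩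

theorem isLocalHom_of_ker_le_ringJacobson {B : Type*} [Ring B] (φ : A →+* B)
    (hφ : Function.Surjective φ) (hker : RingHom.ker φ ≤ Ring.jacobson A) : IsLocalHom φ where
  map_nonunit a ha := by
    obtain ⟨b', hab', hba'⟩ := isUnit_iff_exists.mp ha
    obtain ⟨b, rfl⟩ := hφ b'
    have isUnit_of_map_eq_one {r : A} (hr : φ r = 1) : IsUnit r :=
      isUnit_of_sub_one_mem_ringJacobson (hker (by simp [RingHom.mem_ker, hr]))
    obtain ⟨c, hc⟩ := (isUnit_of_map_eq_one (r := a * b) (by simpa using hab')).exists_right_inv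
    obtain ⟨d, hd⟩ := (isUnit_of_map_eq_one (r := b * a) (by simpa using hba')).exists_left_inv
    exact isUnit_iff_exists_and_exists.mpr ⟨⟨b * c, by rw [← mul_assoc, hc]⟩,
      d * b, by rw [mul_assoc, hd]⟩

theorem isSemisimpleRing_quotient_of_isSemisimpleModule (I : Ideal A) [I.IsTwoSided]
    [IsSemisimpleModule A (A ⧸ I)] : IsSemisimpleRing (A ⧸ I) := by
  have : RingHomSurjective (Ideal.Quotient.mk I) := ⟨Ideal.Quotient.mk_surjective⟩
  let l : (A ⧸ I) →ₛₗ[Ideal.Quotient.mk I] (A ⧸ I) := ⟨AddHom.id _, fun _ _ ↦ rfl⟩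
  exact (l.isSemisimpleModule_iff_of_bijective Function.bijective_id).mp inferInstance

variable [IsSemisimpleRing (A ⧸ Ring.jacobson A)]

theorem HasStableRangeOne.matrix_of_semilocal (ι : Type*) [Fintype ι] [DecidableEq ι] :
    HasStableRangeOne (Matrix ι ι A) := by
  let φ : Matrix ι ι A →+* Matrix ι ι (A ⧸ Ring.jacobson A) :=
    (Ideal.Quotient.mk (Ring.jacobson A)).mapMatrix
  have hφ : Function.Surjective φ := fun M ↦
    ⟨M.map (Function.surjInv Ideal.Quotient.mk_surjective), Matrix.ext fun i j ↦
      Function.surjInv_eq Ideal.Quotient.mk_surjective (M i j)⟩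
  have hker : RingHom.ker φ ≤ Ring.jacobson (Matrix ι ι A) := by
    rw [← Ideal.jacobson_bot (R := Matrix ι ι A), ← Ideal.matrix_bot]
    refine fun M hM ↦ Ideal.matrix_jacobson_le ⊥ fun i j ↦ ?_
    rw [Ideal.jacobson_bot]
    exact Ideal.Quotient.eq_zero_iff_mem.mp (congrFun₂ hM i j)
  have := isLocalHom_of_ker_le_ringJacobson φ hφ hker
  exact .of_surjective_of_isLocalHom φ hφ (.of_isSemisimpleRing _)

theorem HasStableRangeOne.moduleEnd_of_semilocal (V : Type*) [AddCommGroup V] [Module Aᵐᵒᵖ V]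
    [Module.Finite Aᵐᵒᵖ V] [Module.Projective Aᵐᵒᵖ V] :
    HasStableRangeOne (Module.End Aᵐᵒᵖ V) := by
  obtain ⟨n, p, hp⟩ := Module.Finite.exists_fin' Aᵐᵒᵖ V
  obtain ⟨i, hpi⟩ := p.exists_rightInverse_of_surjective (range_eq_top.mpr hp)
  exact .moduleEnd_of_retract i p hpi <|
    .of_ringEquiv (matrixRingEquivEndMulOpposite (Fin n) A).symm (.matrix_of_semilocal (Fin n))

end Jacobson

theorem HasStableRangeOne.exists_linearEquiv_comp_eq {R V U : Type*} [Ring R] [AddCommGroup V]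
    [AddCommGroup U] [Module R V] [Module R U] [Module.Projective R V]
    (hV : HasStableRangeOne (Module.End R V)) {α α' : V →ₗ[R] U} (hα : Function.Surjective α)
    (hα' : Function.Surjective α') : ∃ ψ : V ≃ₗ[R] V, α' ∘ₗ ψ.toLinearMap = α := by
  obtain ⟨f, hf⟩ := Module.projective_lifting_property α' α hα'
  obtain ⟨g, hg⟩ := Module.projective_lifting_property α α' hα
  let b : Module.End R V := 1 - f * g
  have hb : α' ∘ₗ b = 0 := by
    rw [comp_sub, Module.End.mul_eq_comp, ← comp_assoc, hf, hg, Module.End.one_eq_id, comp_id,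
      sub_self]
  obtain ⟨y, hy⟩ := hV f b g 1 (by simp only [b, mul_one, add_sub_cancel])
  refine ⟨.ofBijective (f + b * y) ((Module.End.isUnit_iff _).mp hy), ?_⟩
  calc α' ∘ₗ (f + b * y) = α' ∘ₗ f + (α' ∘ₗ b) ∘ₗ y := by
        rw [comp_add, Module.End.mul_eq_comp, comp_assoc]
    _ = α := by rw [hb, zero_comp, add_zero, hf]

/-- **Lifting isomorphisms along surjections from projective modules over a semilocal ring.**
Let `A` be a semilocal ring (`A/Jac(A)` is semisimple), let `V ≅ V'` be finitely generated
projective right `A`-modules, let `α : V → U` and `α' : V' → U'` be surjective `A`-linear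
maps, and let `ξ : U ≅ U'` be an isomorphism.  Then there is an isomorphism `ψ : V ≅ V'`
with `ξ ∘ α = α' ∘ ψ`. -/
theorem exists_iso_lifting_surjections_of_semilocal
    {A : Type*} [Ring A]
    (hsemilocal : IsSemisimpleModule A (A ⧸ Ideal.jacobson (⊥ : Ideal A)))
    {V V' U U' : Type*}
    [AddCommGroup V] [AddCommGroup V'] [AddCommGroup U] [AddCommGroup U']
    [Module Aᵐᵒᵖ V] [Module Aᵐᵒᵖ V'] [Module Aᵐᵒᵖ U] [Module Aᵐᵒᵖ U']
    [Module.Finite Aᵐᵒᵖ V] [Module.Projective Aᵐᵒᵖ V]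
    [Module.Finite Aᵐᵒᵖ V'] [Module.Projective Aᵐᵒᵖ V']
    (hVV' : Nonempty (V ≃ₗ[Aᵐᵒᵖ] V'))
    (α : V →ₗ[Aᵐᵒᵖ] U) (hα : Function.Surjective α)
    (α' : V' →ₗ[Aᵐᵒᵖ] U') (hα' : Function.Surjective α')
    (ξ : U ≃ₗ[Aᵐᵒᵖ] U') :
    ∃ ψ : V ≃ₗ[Aᵐᵒᵖ] V', ∀ x : V, ξ (α x) = α' (ψ x) := by
  obtain ⟨e⟩ := hVV'
  rw [Ideal.jacobson_bot] at hsemilocal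
  have := isSemisimpleRing_quotient_of_isSemisimpleModule (Ring.jacobson A)
  have hV : HasStableRangeOne (Module.End Aᵐᵒᵖ V) := .moduleEnd_of_semilocal V
  obtain ⟨ψ, hψ⟩ := hV.exists_linearEquiv_comp_eq
    (α := ξ.toLinearMap ∘ₗ α) (α' := α' ∘ₗ e.toLinearMap)
    (ξ.surjective.comp hα) (hα'.comp e.surjective)
  exact ⟨ψ.trans e, fun x ↦ (LinearMap.congr_fun hψ x).symm⟩
end
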